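/- Positivity preservation of the first-order multidimensional scheme with source term (Theorem 4.1, one cell, one step): Let d = 2, N ≥ 1, |K| > 0, edge lengths ℓ₁,…,ℓ_N > 0 and unit outward normals ξ⁽¹⁾,…,ξ⁽ᴺ⁾ ∈ ℝ² with Σⱼ ℓⱼ ξ⁽ʲ⁾ = 0 (Green's identity for a polygon). Let Ū_K ∈ 𝒢 (cell average, with density ρ̄_K and magnetic field B̄_K) and Ūⱼ ∈ 𝒢 (neighbor averages, with magnetic fields B̄ⱼ) for j = 1,…,N. For each j let wave speeds satisfy σⱼʳ ≥ α_r(Ūⱼ, Ū_K; ξ⁽ʲ⁾) and σⱼˡ ≤ α_l(Ū_K, Ūⱼ; ξ⁽ʲ⁾), and set σⱼ⁺ = max{σⱼʳ, 0}, σⱼ⁻ = min{σⱼˡ, 0}. Define the discrete divergence div = |K|⁻¹ Σⱼ ℓⱼ ⟨ξ⁽ʲ⁾, (σⱼ⁺ B̄_K − σⱼ⁻ B̄ⱼ)/(σⱼ⁺ − σⱼ⁻)⟩, and the update Ū' = Ū_K − (Δt/|K|) Σⱼ ℓⱼ F̂(Ū_K, Ūⱼ; ξ⁽ʲ⁾)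 − Δt·div·S(Ū_K) with Δt > 0. If Δt·[ |K|⁻¹ Σⱼ ℓⱼ(−σⱼ⁻) + |div|/√ρ̄_K ] < 1, then Ū' ∈ 𝒢. -/

import Mathlib

noncomputable section

open Finset

/-- An MHD state `U = (ρ, m, B, E)` viewed as a vector in `ℝ⁸`. -/
abbrev MHDState := Fin 8 → ℝ

namespace MHD

/-- Build a state from density, momentum, magnetic field, total energy. -/
def mk (ρ : ℝ) (m B : Fin 3 → ℝ) (E : ℝ) : MHDState :=
  ![ρ, m 0, m 1, m 2, B 0, B 1, B 2, E]

/-- Density component. -/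
def dens (U : MHDState) : ℝ := U 0

/-- Momentum components. -/
def mom (U : MHDState) : Fin 3 → ℝ := ![U 1, U 2, U 3]

/-- Magnetic field components. -/
def magB (U : MHDState) : Fin 3 → ℝ := ![U 4, U 5, U 6]

/-- Total energy component. -/
def toten (U : MHDState) : ℝ := U 7

/-- Euclidean dot product on `ℝ³`. -/
def dot3 (a b : Fin 3 → ℝ) : ℝ := ∑ k, a k * b k

/-- Squared Euclidean norm on `ℝ³`. -/
def sq3 (a : Fin 3 → ℝ) : ℝ := dot3 a a

/-- Euclidean norm on `ℝ³`. -/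
def norm3 (a : Fin 3 → ℝ) : ℝ := Real.sqrt (sq3 a)

/-- Velocity `v = m / ρ`. -/
def vel (U : MHDState) : Fin 3 → ℝ := fun k => mom U k / dens U

/-- Internal energy `𝓔(U) = E − (|m|²/ρ + |B|²)/2`. -/
def intE (U : MHDState) : ℝ := toten U - (sq3 (mom U) / dens U + sq3 (magB U)) / 2

/-- Specific internal energy `e = 𝓔(U)/ρ`. -/
def specE (U : MHDState) : ℝ := intE U / dens U

/-- The admissible state set `𝒢`. -/
def Gset : Set MHDState := {U | 0 < dens U ∧ 0 < intE U}

/-- The set `𝒢_ρ` of states with positive density. -/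
def Grho : Set MHDState := {U | 0 < dens U}

/-- Euclidean dot product on `ℝ⁸`. -/
def dot8 (U V : MHDState) : ℝ := ∑ i, U i * V i

/-- The vector `n* = (|v*|²/2, −v*, −B*, 1)`. -/
def nstar (vs Bs : Fin 3 → ℝ) : MHDState :=
  mk (sq3 vs / 2) (fun k => -vs k) (fun k => -Bs k) 1

/-- The set `𝒢*`. -/
def GstarSet : Set MHDState :=
  {U | 0 < dens U ∧ ∀ vs Bs : Fin 3 → ℝ, 0 < dot8 U (nstar vs Bs) + sq3 Bs / 2}

/-- Equation of state assumption: for `ρ > 0`, `e > 0 ↔ p(ρ,e) > 0`. -/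
def IsEOS (pfun : ℝ → ℝ → ℝ) : Prop :=
  ∀ ρ e : ℝ, 0 < ρ → (0 < e ↔ 0 < pfun ρ e)

/-- Pressure of a state, via the equation of state. -/
def pres (pfun : ℝ → ℝ → ℝ) (U : MHDState) : ℝ := pfun (dens U) (specE U)

/-- Total pressure `p + |B|²/2`. -/
def ptot (pfun : ℝ → ℝ → ℝ) (U : MHDState) : ℝ := pres pfun U + sq3 (magB U) / 2

/-- The `i`-th flux `F_i(U)`. -/
def flux (pfun : ℝ → ℝ → ℝ) (i : Fin 3) (U : MHDState) : MHDState :=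
  mk (dens U * vel U i)
    (fun k => dens U * vel U i * vel U k - magB U i * magB U k
      + ptot pfun U * (if k = i then 1 else 0))
    (fun k => vel U i * magB U k - magB U i * vel U k)
    (vel U i * (toten U + ptot pfun U) - magB U i * dot3 (vel U) (magB U))

/-- Directional inner product `⟨ξ, w⟩ = Σ_{k<d} ξ_k w_k` for `ξ ∈ ℝ^d`, `w ∈ ℝ³`, `d ≤ 3`. -/
def dirDot {d : ℕ} (hd : d ≤ 3) (ξ : Fin d → ℝ) (w : Fin 3 → ℝ) : ℝ :=
  ∑ k, ξ k * w (Fin.castLE hd k)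

/-- Directional flux `⟨ξ, F(U)⟩ = Σ_{i<d} ξ_i F_i(U)`. -/
def dirFlux (pfun : ℝ → ℝ → ℝ) {d : ℕ} (hd : d ≤ 3) (ξ : Fin d → ℝ) (U : MHDState) :
    MHDState :=
  ∑ i, ξ i • flux pfun (Fin.castLE hd i) U

/-- `ξ` is a unit vector. -/
def unitVec {d : ℕ} (ξ : Fin d → ℝ) : Prop := (∑ k, (ξ k) ^ 2) = 1

/-- `𝒞_s(U) = p / (ρ √(2e))`. -/
def soundC (pfun : ℝ → ℝ → ℝ) (U : MHDState) : ℝ :=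
  pres pfun U / (dens U * Real.sqrt (2 * specE U))

/-- `𝒞(U; ξ)`. -/
def waveC (pfun : ℝ → ℝ → ℝ) {d : ℕ} (hd : d ≤ 3) (ξ : Fin d → ℝ) (U : MHDState) : ℝ :=
  Real.sqrt ((soundC pfun U ^ 2 + sq3 (magB U) / dens U
    + Real.sqrt ((soundC pfun U ^ 2 + sq3 (magB U) / dens U) ^ 2
      - 4 * soundC pfun U ^ 2 * dirDot hd ξ (magB U) ^ 2 / dens U)) / 2)

/-- Roe-type averaged velocity `v̄ = (√ρ v + √ρ̃ ṽ)/(√ρ + √ρ̃)`. -/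
def roeV (U Ut : MHDState) : Fin 3 → ℝ := fun k =>
  (Real.sqrt (dens U) * vel U k + Real.sqrt (dens Ut) * vel Ut k)
    / (Real.sqrt (dens U) + Real.sqrt (dens Ut))

/-- `α_r(U, Ũ; ξ)`. -/
def alphaR (pfun : ℝ → ℝ → ℝ) {d : ℕ} (hd : d ≤ 3) (ξ : Fin d → ℝ) (U Ut : MHDState) : ℝ :=
  max (dirDot hd ξ (vel U)) (dirDot hd ξ (roeV U Ut)) + waveC pfun hd ξ U
    + norm3 (magB U - magB Ut) / (Real.sqrt (dens U) + Real.sqrt (dens Ut))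

/-- `α_l(U, Ũ; ξ)`. -/
def alphaL (pfun : ℝ → ℝ → ℝ) {d : ℕ} (hd : d ≤ 3) (ξ : Fin d → ℝ) (U Ut : MHDState) : ℝ :=
  min (dirDot hd ξ (vel U)) (dirDot hd ξ (roeV U Ut)) - waveC pfun hd ξ U
    - norm3 (magB U - magB Ut) / (Real.sqrt (dens U) + Real.sqrt (dens Ut))

/-- `α_⋆(U, Ũ; ξ)`. -/
def alphaS (pfun : ℝ → ℝ → ℝ) {d : ℕ} (hd : d ≤ 3) (ξ : Fin d → ℝ) (U Ut : MHDState) : ℝ :=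
  max (|dirDot hd ξ (vel U)|) (|dirDot hd ξ (roeV U Ut)|) + waveC pfun hd ξ U
    + norm3 (magB U - magB Ut) / (Real.sqrt (dens U) + Real.sqrt (dens Ut))

/-- The vector `θ(U, v*, B*) = 2^{−1/2}(B − B*, √ρ(v − v*), √(2ρe)) ∈ ℝ⁷`. -/
def theta (U : MHDState) (vs Bs : Fin 3 → ℝ) : Fin 7 → ℝ :=
  ![(magB U 0 - Bs 0) / Real.sqrt 2,
    (magB U 1 - Bs 1) / Real.sqrt 2,
    (magB U 2 - Bs 2) / Real.sqrt 2,
    Real.sqrt (dens U) * (vel U 0 - vs 0) / Real.sqrt 2,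
    Real.sqrt (dens U) * (vel U 1 - vs 1) / Real.sqrt 2,
    Real.sqrt (dens U) * (vel U 2 - vs 2) / Real.sqrt 2,
    Real.sqrt (2 * intE U) / Real.sqrt 2]

/-- `|θ|²`. -/
def thetaSq (U : MHDState) (vs Bs : Fin 3 → ℝ) : ℝ := ∑ k, theta U vs Bs k ^ 2

/-- Godunov–Powell source vector `S(U) = (0, B, v, v·B)`. -/
def source (U : MHDState) : MHDState := mk 0 (magB U) (vel U) (dot3 (vel U) (magB U))

/-- HLL numerical flux with clamped wave speeds `σm ≤ 0 ≤ σp`. -/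
def hllFlux (pfun : ℝ → ℝ → ℝ) {d : ℕ} (hd : d ≤ 3) (ξ : Fin d → ℝ)
    (Um Up : MHDState) (σm σp : ℝ) : MHDState :=
  (σp - σm)⁻¹ • (σp • dirFlux pfun hd ξ Um - σm • dirFlux pfun hd ξ Up
    + (σm * σp) • (Up - Um))

/-- HLL intermediate state `H(U⁻, U⁺; ξ)`. -/
def hllMid (pfun : ℝ → ℝ → ℝ) {d : ℕ} (hd : d ≤ 3) (ξ : Fin d → ℝ)
    (Um Up : MHDState) (σm σp : ℝ) : MHDState :=
  (σp - σm)⁻¹ • (σp • Up - dirFlux pfun hd ξ Up - σm • Um + dirFlux pfun hd ξ Um)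

/-- The quantity `α̂_j` of Theorem 2.3. -/
def alphaHat (pfun : ℝ → ℝ → ℝ) {d : ℕ} (hd : d ≤ 3) {N : ℕ}
    (s : Fin N → ℝ) (ξ : Fin N → Fin d → ℝ) (U : Fin N → MHDState) (j : Fin N) : ℝ :=
  max (dirDot hd (ξ j) (vel (U j)))
      ((∑ i, s i)⁻¹ * ∑ i, s i * dirDot hd (fun k => ξ j k - ξ i k) (roeV (U j) (U i)))
  + waveC pfun hd (ξ j) (U j)
  + 2 * (∑ i, s i)⁻¹ * ∑ i, s i *
      (norm3 (magB (U j) - magB (U i)) / (Real.sqrt (dens (U j)) + Real.sqrt (dens (U i))))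

def d1le3 : (1 : ℕ) ≤ 3 := by omega
def d2le3 : (2 : ℕ) ≤ 3 := by omega

/-- In one dimension the direction `ξ = 1`. -/
def xi1 : Fin 1 → ℝ := fun _ => 1

section InnerProduct

variable {V : Type*} [NormedAddCommGroup V] [InnerProductSpace ℝ V]

open scoped RealInnerProductSpace

/-- If `c` is the fast speed built from a sound speed `a` and `β = B/√ρ` in direction `e`, then
the square of the adjoint of the coupling operator is bounded by `c²`. -/
theorem fast_operator_bound {e x β : V} {a c : ℝ} (he : ⟪e, e⟫ = 1)
    (htr : a ^ 2 + ⟪β, β⟫ ≤ 2 * c ^ 2)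
    (hchar : c ^ 4 - (a ^ 2 + ⟪β, β⟫) * c ^ 2 + a ^ 2 * ⟪e, β⟫ ^ 2 = 0) :
    (a ^ 2 + ⟪β, β⟫) * ⟪e, x⟫ ^ 2 - 2 * ⟪e, x⟫ * ⟪e, β⟫ * ⟪x, β⟫ + ⟪e, β⟫ ^ 2 * ⟪x, x⟫
      ≤ c ^ 2 * ⟪x, x⟫ := by
  have hyy : ⟪x - ⟪e, x⟫ • e, x - ⟪e, x⟫ • e⟫ = ⟪x, x⟫ - ⟪e, x⟫ ^ 2 := by
    simp only [inner_sub_left, inner_sub_right, real_inner_smul_left, real_inner_smul_right, he,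
      real_inner_comm e x]
    ring
  have hgg : ⟪β - ⟪e, β⟫ • e, β - ⟪e, β⟫ • e⟫ = ⟪β, β⟫ - ⟪e, β⟫ ^ 2 := by
    simp only [inner_sub_left, inner_sub_right, real_inner_smul_left, real_inner_smul_right, he,
      real_inner_comm e β]
    ring
  have hyg : ⟪x - ⟪e, x⟫ • e, β - ⟪e, β⟫ • e⟫ = ⟪x, β⟫ - ⟪e, x⟫ * ⟪e, β⟫ := by
    simp only [inner_sub_left, inner_sub_right, real_inner_smul_left, real_inner_smul_right, he,
      real_inner_comm e x]
    ring
  have hcs := real_inner_mul_inner_self_le (x - ⟪e, x⟫ • e) (β - ⟪e, β⟫ • e)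
  have hy0 : 0 ≤ ⟪x - ⟪e, x⟫ • e, x - ⟪e, x⟫ • e⟫ := real_inner_self_nonneg
  have hg0 : 0 ≤ ⟪β - ⟪e, β⟫ • e, β - ⟪e, β⟫ • e⟫ := real_inner_self_nonneg
  rw [hyy] at hy0 hcs
  rw [hgg] at hg0 hcs
  rw [hyg] at hcs
  generalize ⟪x, x⟫ = xx at *
  generalize ⟪β, β⟫ = bb at *
  generalize ⟪x, β⟫ = xb at *
  generalize ⟪e, x⟫ = x₁ at *
  generalize ⟪e, β⟫ = b₁ at *
  obtain ⟨P, hP⟩ : ∃ P, P = c ^ 2 - a ^ 2 - (bb - b₁ ^ 2) := ⟨_, rfl⟩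
  obtain ⟨R, hR⟩ : ∃ R, R = c ^ 2 - b₁ ^ 2 := ⟨_, rfl⟩
  obtain ⟨t, ht⟩ : ∃ t, t = xb - x₁ * b₁ := ⟨_, rfl⟩
  have hPR : P * R = b₁ ^ 2 * (bb - b₁ ^ 2) := by
    subst hP hR
    linear_combination hchar
  have hsum : 0 ≤ P + R := by subst hP hR; linarith
  have hprod : 0 ≤ P * R := by rw [hPR]; positivity
  have hP0 : 0 ≤ P := by
    by_contra! h
    nlinarith
  have hR0 : 0 ≤ R := by
    by_contra! h
    nlinarith
  have key : 0 ≤ P * x₁ ^ 2 + R * (xx - x₁ ^ 2) + 2 * x₁ * b₁ * t := by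
    rcases hP0.eq_or_lt with h | h
    · have hz : (b₁ * t) ^ 2 ≤ 0 := by
        rw [← h, zero_mul] at hPR
        rw [← ht] at hcs
        calc (b₁ * t) ^ 2 = b₁ ^ 2 * (t * t) := by ring
          _ ≤ b₁ ^ 2 * ((xx - x₁ ^ 2) * (bb - b₁ ^ 2)) := by gcongr
          _ = (xx - x₁ ^ 2) * (b₁ ^ 2 * (bb - b₁ ^ 2)) := by ring
          _ = 0 := by rw [← hPR, mul_zero]
      have hbt : b₁ * t = 0 := pow_eq_zero_iff two_ne_zero |>.1 (le_antisymm hz (sq_nonneg _))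
      have : 2 * x₁ * b₁ * t = 0 := by rw [mul_assoc, hbt, mul_zero]
      rw [← h, this]
      have := mul_nonneg hR0 hy0
      linarith
    · refine nonneg_of_mul_nonneg_right (b := _) ?_ h
      have h1 : b₁ ^ 2 * (t * t) ≤ b₁ ^ 2 * ((xx - x₁ ^ 2) * (bb - b₁ ^ 2)) := by
        rw [ht]; gcongr
      calc (0 : ℝ) ≤ (P * x₁ + b₁ * t) ^ 2
            + (b₁ ^ 2 * ((xx - x₁ ^ 2) * (bb - b₁ ^ 2)) - b₁ ^ 2 * (t * t)) := by
            have := sq_nonneg (P * x₁ + b₁ * t)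
            linarith
        _ = _ := by linear_combination (-(xx - x₁ ^ 2)) * hPR
  rw [hP, hR, ht] at key
  linarith

/-- The coupling form between momentum, magnetic and thermal variables is controlled by the
fast speed. -/
theorem fast_coupling_bound {e x β b : V} {a c z : ℝ} (he : ⟪e, e⟫ = 1) (hc : 0 < c)
    (htr : a ^ 2 + ⟪β, β⟫ ≤ 2 * c ^ 2)
    (hchar : c ^ 4 - (a ^ 2 + ⟪β, β⟫) * c ^ 2 + a ^ 2 * ⟪e, β⟫ ^ 2 = 0) :
    a * ⟪e, x⟫ * z + ⟪e, x⟫ * ⟪β, b⟫ - ⟪e, β⟫ * ⟪x, b⟫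
      ≤ c * ((⟪x, x⟫ + ⟪b, b⟫ + z ^ 2) / 2) := by
  have h1 := fast_operator_bound (x := x) he htr hchar
  have h2 : 0 ≤ ⟪⟪e, x⟫ • β - ⟪e, β⟫ • x - c • b, ⟪e, x⟫ • β - ⟪e, β⟫ • x - c • b⟫ :=
    real_inner_self_nonneg
  simp only [inner_sub_left, inner_sub_right, real_inner_smul_left, real_inner_smul_right,
    real_inner_comm x β, real_inner_comm b β, real_inner_comm b x] at h2
  have h3 := sq_nonneg (a * ⟪e, x⟫ - c * z)
  simp only [real_inner_comm b β, real_inner_comm b x] at h1 ⊢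
  refine le_of_mul_le_mul_left ?_ hc
  linarith

/-- Estimate for the jump term `(v*₁ - v̄₁)(|b₁|² - |b₂|²)/2`. -/
theorem roe_jump_bound {e x₁ x₂ b₁ b₂ : V} (he : ⟪e, e⟫ = 1) :
    -(⟪e, x₁⟫ + ⟪e, x₂⟫) * ((⟪b₁, b₁⟫ - ⟪b₂, b₂⟫) / 2)
      ≤ ‖b₁ - b₂‖ * ((⟪x₁, x₁⟫ + ⟪b₁, b₁⟫) / 2 + (⟪x₂, x₂⟫ + ⟪b₂, b₂⟫) / 2) := by
  have hen : ‖e‖ = 1 := by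
    rw [real_inner_self_eq_norm_sq] at he
    exact (pow_eq_one_iff_of_nonneg (norm_nonneg e) two_ne_zero).1 he
  have hb : ⟪b₁ - b₂, b₁ + b₂⟫ = ⟪b₁, b₁⟫ - ⟪b₂, b₂⟫ := by
    simp only [inner_sub_left, inner_add_right, real_inner_comm b₁ b₂]
    ring
  have hx : ⟪e, x₁ + x₂⟫ = ⟪e, x₁⟫ + ⟪e, x₂⟫ := inner_add_right _ _ _
  rw [← hb, ← hx]
  have h1 := abs_real_inner_le_norm (b₁ - b₂) (b₁ + b₂)
  have h2 := abs_real_inner_le_norm e (x₁ + x₂)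
  rw [hen, one_mul] at h2
  have hxx := parallelogram_law_with_norm ℝ x₁ x₂
  have hbb := parallelogram_law_with_norm ℝ b₁ b₂
  simp only [real_inner_self_eq_norm_sq]
  have h4 : ‖x₁ + x₂‖ * ‖b₁ + b₂‖ ≤
      ‖x₁‖ ^ 2 + ‖x₂‖ ^ 2 + (‖b₁‖ ^ 2 + ‖b₂‖ ^ 2) := by
    nlinarith [sq_nonneg (‖x₁ + x₂‖ - ‖b₁ + b₂‖), sq_nonneg ‖x₁ - x₂‖, sq_nonneg ‖b₁ - b₂‖]
  calc -⟪e, x₁ + x₂⟫ * (⟪b₁ - b₂, b₁ + b₂⟫ / 2)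
      ≤ |⟪e, x₁ + x₂⟫| * (|⟪b₁ - b₂, b₁ + b₂⟫| / 2) := by
        refine (le_abs_self _).trans_eq ?_
        rw [abs_mul, abs_neg, abs_div, abs_two]
    _ ≤ ‖x₁ + x₂‖ * (‖b₁ - b₂‖ * ‖b₁ + b₂‖ / 2) := by gcongr
    _ = ‖b₁ - b₂‖ * ((‖x₁ + x₂‖ * ‖b₁ + b₂‖) / 2) := by ring
    _ ≤ ‖b₁ - b₂‖ * ((‖x₁‖ ^ 2 + ‖x₂‖ ^ 2 + (‖b₁‖ ^ 2 + ‖b₂‖ ^ 2)) / 2) := by gcongr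
    _ = _ := by ring

end InnerProduct

theorem inner_toLp_eq_dot3 (a b : Fin 3 → ℝ) :
    inner ℝ (WithLp.toLp 2 a : EuclideanSpace ℝ (Fin 3)) (WithLp.toLp 2 b) = dot3 a b := by
  simp only [dot3, PiLp.inner_apply, RCLike.inner_apply, conj_trivial]
  exact Finset.sum_congr rfl fun k _ => mul_comm _ _

theorem sq3_nonneg (a : Fin 3 → ℝ) : 0 ≤ sq3 a := by
  unfold sq3 dot3
  exact Finset.sum_nonneg fun k _ => mul_self_nonneg (a k)

theorem norm_toLp_eq_norm3 (a : Fin 3 → ℝ) :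
    ‖(WithLp.toLp 2 a : EuclideanSpace ℝ (Fin 3))‖ = norm3 a := by
  rw [norm3, sq3, ← inner_toLp_eq_dot3, norm_eq_sqrt_real_inner]

/-- A planar direction viewed as a vector of `ℝ³`. -/
def dir3 (ξ : Fin 2 → ℝ) : Fin 3 → ℝ := ![ξ 0, ξ 1, 0]

theorem dirDot_eq_dot3 (ξ : Fin 2 → ℝ) (w : Fin 3 → ℝ) :
    dirDot d2le3 ξ w = dot3 (dir3 ξ) w := by
  simp [dirDot, dot3, dir3, Fin.sum_univ_two, Fin.sum_univ_three, Fin.castLE]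

theorem dot3_dir3_self {ξ : Fin 2 → ℝ} (hξ : unitVec ξ) : dot3 (dir3 ξ) (dir3 ξ) = 1 := by
  rw [unitVec, Fin.sum_univ_two] at hξ
  simp [dot3, dir3, Fin.sum_univ_three, ← hξ, sq]

/-- The relative energy `U · n* + |B*|²/2`. -/
def relE (U : MHDState) (vs Bs : Fin 3 → ℝ) : ℝ := dot8 U (nstar vs Bs) + sq3 Bs / 2

theorem relE_eq {U : MHDState} (hU : 0 < dens U) (vs Bs : Fin 3 → ℝ) :
    relE U vs Bs = (dens U * sq3 (vel U - vs) + sq3 (magB U - Bs)) / 2 + intE U := by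
  have hρ : U 0 ≠ 0 := ne_of_gt hU
  simp [relE, dot8, nstar, mk, sq3, dot3, vel, intE, dens, mom, magB, toten, Fin.sum_univ_succ]
  field_simp
  ring

theorem relE_self {U : MHDState} (hU : 0 < dens U) : relE U (vel U) (magB U) = intE U := by
  rw [relE_eq hU]
  simp [sq3, dot3]

theorem relE_pos {U : MHDState} (hU : U ∈ Gset) (vs Bs : Fin 3 → ℝ) : 0 < relE U vs Bs := by
  rw [relE_eq hU.1]
  have h1 := mul_nonneg hU.1.le (sq3_nonneg (vel U - vs))
  have h2 := sq3_nonneg (magB U - Bs)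
  have h3 := hU.2
  linarith

theorem toten_eq {U : MHDState} (hU : 0 < dens U) :
    toten U = (dens U * sq3 (vel U) + sq3 (magB U)) / 2 + intE U := by
  have hρ : dens U ≠ 0 := ne_of_gt hU
  simp [sq3, dot3, vel, intE, Fin.sum_univ_succ]
  field_simp
  ring

/-- The coupling terms in the flux projected on `n*`. -/
def coupling (pfun : ℝ → ℝ → ℝ) (ξ : Fin 2 → ℝ) (U : MHDState) (w b : Fin 3 → ℝ) : ℝ :=
  pres pfun U * dirDot d2le3 ξ w + dirDot d2le3 ξ w * dot3 (magB U) b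
    - dirDot d2le3 ξ (magB U) * dot3 w b

theorem dot8_dirFlux_nstar (pfun : ℝ → ℝ → ℝ) (ξ : Fin 2 → ℝ) {U : MHDState} (hU : 0 < dens U)
    (vs Bs : Fin 3 → ℝ) :
    dot8 (dirFlux pfun d2le3 ξ U) (nstar vs Bs)
      = dirDot d2le3 ξ (vel U) * relE U vs Bs + coupling pfun ξ U (vel U - vs) (magB U - Bs)
        - dirDot d2le3 ξ (vel U - vs) * (sq3 (magB U - Bs) / 2)
        + dirDot d2le3 ξ (magB U) * dot3 vs Bs - dirDot d2le3 ξ vs * (sq3 Bs / 2) := by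
  rw [relE_eq hU]
  simp only [dirFlux, flux, ptot, toten_eq hU, coupling]
  generalize vel U = v
  generalize magB U = B
  generalize pres pfun U = p
  generalize intE U = ε
  generalize dens U = ρ
  simp [dot8, nstar, mk, dirDot, dot3, sq3, Fin.sum_univ_succ, Fin.castLE]
  ring

theorem dens_dirFlux (pfun : ℝ → ℝ → ℝ) (ξ : Fin 2 → ℝ) (U : MHDState) :
    dens (dirFlux pfun d2le3 ξ U) = dens U * dirDot d2le3 ξ (vel U) := by
  simp [dirFlux, flux, dens, mk, dirDot, Fin.sum_univ_succ, Fin.castLE]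
  ring

theorem dot8_source_nstar (U : MHDState) (vs Bs : Fin 3 → ℝ) :
    dot8 (source U) (nstar vs Bs)
      = dot3 (vel U - vs) (magB U - Bs) - dot3 vs Bs := by
  simp only [source]
  generalize vel U = v
  generalize magB U = B
  simp [dot8, nstar, mk, dot3, Fin.sum_univ_succ]
  ring

theorem pres_pos {pfun : ℝ → ℝ → ℝ} (hEOS : IsEOS pfun) {U : MHDState} (hU : U ∈ Gset) :
    0 < pres pfun U :=
  (hEOS _ _ hU.1).1 (div_pos hU.2 hU.1)

theorem soundC_pos {pfun : ℝ → ℝ → ℝ} (hEOS : IsEOS pfun) {U : MHDState} (hU : U ∈ Gset) :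
    0 < soundC pfun U := by
  have h1 := pres_pos hEOS hU
  have h2 := hU.1
  have h3 : 0 < specE U := div_pos hU.2 hU.1
  unfold soundC
  positivity

theorem soundC_mul {pfun : ℝ → ℝ → ℝ} {U : MHDState} (hU : U ∈ Gset) :
    soundC pfun U * (√(dens U) * √(2 * intE U)) = pres pfun U := by
  have h2 := hU.1
  have h3 : 0 < specE U := div_pos hU.2 hU.1
  have h4 : 2 * intE U = dens U * (2 * specE U) := by
    unfold specE
    field_simp
  have h5 : √(dens U) * √(2 * intE U) = dens U * √(2 * specE U) := by
    rw [h4, Real.sqrt_mul h2.le, ← mul_assoc, Real.mul_self_sqrt h2.le]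
  rw [h5, soundC, div_mul_cancel₀]
  positivity

theorem dot3_mul_self_le (a b : Fin 3 → ℝ) : dot3 a b ^ 2 ≤ dot3 a a * dot3 b b := by
  simpa only [inner_toLp_eq_dot3, ← sq] using real_inner_mul_inner_self_le
    (WithLp.toLp 2 a : EuclideanSpace ℝ (Fin 3)) (WithLp.toLp 2 b)

/-- The square of `𝒞(U; ξ)` is the larger root of its characteristic equation. -/
theorem waveC_spec {pfun : ℝ → ℝ → ℝ} (hEOS : IsEOS pfun) {ξ : Fin 2 → ℝ} (hξ : unitVec ξ)
    {U : MHDState} (hU : U ∈ Gset) :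
    0 < waveC pfun d2le3 ξ U ∧
    soundC pfun U ^ 2 + sq3 (magB U) / dens U ≤ 2 * waveC pfun d2le3 ξ U ^ 2 ∧
    waveC pfun d2le3 ξ U ^ 4
      - (soundC pfun U ^ 2 + sq3 (magB U) / dens U) * waveC pfun d2le3 ξ U ^ 2
      + soundC pfun U ^ 2 * (dirDot d2le3 ξ (magB U) ^ 2 / dens U) = 0 := by
  have ha := soundC_pos hEOS hU
  have hρ := hU.1
  have hB := sq3_nonneg (magB U)
  have hcs : dirDot d2le3 ξ (magB U) ^ 2 / dens U ≤ sq3 (magB U) / dens U := by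
    have := dot3_mul_self_le (dir3 ξ) (magB U)
    rw [dot3_dir3_self hξ, one_mul, ← dirDot_eq_dot3] at this
    exact div_le_div_of_nonneg_right this hρ.le
  have hβ : 0 ≤ sq3 (magB U) / dens U := by positivity
  have hsplit : 4 * soundC pfun U ^ 2 * dirDot d2le3 ξ (magB U) ^ 2 / dens U
      = 4 * soundC pfun U ^ 2 * (dirDot d2le3 ξ (magB U) ^ 2 / dens U) := mul_div_assoc _ _ _
  rw [waveC, hsplit]
  generalize sq3 (magB U) / dens U = β at *
  generalize dirDot d2le3 ξ (magB U) ^ 2 / dens U = γ at *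
  generalize soundC pfun U = a at *
  have hdisc : 0 ≤ (a ^ 2 + β) ^ 2 - 4 * a ^ 2 * γ := by
    nlinarith [sq_nonneg (a ^ 2 - β), mul_le_mul_of_nonneg_left hcs (sq_nonneg a)]
  have hs := Real.sqrt_nonneg ((a ^ 2 + β) ^ 2 - 4 * a ^ 2 * γ)
  have hss := Real.sq_sqrt hdisc
  generalize √((a ^ 2 + β) ^ 2 - 4 * a ^ 2 * γ) = s at *
  have hpos : 0 < (a ^ 2 + β + s) / 2 := by positivity
  have hsq := Real.sq_sqrt hpos.le
  refine ⟨Real.sqrt_pos.2 hpos, by rw [hsq]; linarith, ?_⟩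
  have h4 : √((a ^ 2 + β + s) / 2) ^ 4 = ((a ^ 2 + β + s) / 2) ^ 2 := by
    rw [show 4 = 2 * 2 from rfl, pow_mul, hsq]
  rw [h4, hsq]
  linear_combination hss / 4

theorem coupling_neg (pfun : ℝ → ℝ → ℝ) (ξ : Fin 2 → ℝ) (U : MHDState) (w b : Fin 3 → ℝ) :
    coupling pfun ξ U (-w) b = -coupling pfun ξ U w b := by
  simp [coupling, dirDot, dot3, Fin.sum_univ_succ]
  ring

theorem coupling_le {pfun : ℝ → ℝ → ℝ} (hEOS : IsEOS pfun) {ξ : Fin 2 → ℝ} (hξ : unitVec ξ)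
    {U : MHDState} (hU : U ∈ Gset) (w b : Fin 3 → ℝ) :
    coupling pfun ξ U w b
      ≤ waveC pfun d2le3 ξ U * ((dens U * sq3 w + sq3 b) / 2 + intE U) := by
  obtain ⟨hc, htr, hchar⟩ := waveC_spec hEOS hξ hU
  have hρ := hU.1
  have hs : 0 < √(dens U) := Real.sqrt_pos.2 hρ
  have hss : √(dens U) ^ 2 = dens U := Real.sq_sqrt hρ.le
  have hinv : (√(dens U))⁻¹ ^ 2 = (dens U)⁻¹ := by rw [inv_pow, hss]
  have hββ : (√(dens U))⁻¹ * ((√(dens U))⁻¹ * sq3 (magB U)) = sq3 (magB U) / dens U := by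
    rw [← mul_assoc, ← sq, hinv, inv_mul_eq_div]
  have key := fast_coupling_bound (e := (WithLp.toLp 2 (dir3 ξ) : EuclideanSpace ℝ (Fin 3)))
    (x := √(dens U) • WithLp.toLp 2 w) (β := (√(dens U))⁻¹ • WithLp.toLp 2 (magB U))
    (b := WithLp.toLp 2 b) (a := soundC pfun U) (c := waveC pfun d2le3 ξ U)
    (z := √(2 * intE U))
  simp only [real_inner_smul_left, real_inner_smul_right, inner_toLp_eq_dot3] at key
  have h2 : √(2 * intE U) ^ 2 = 2 * intE U := Real.sq_sqrt (by linarith [hU.2])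
  simp only [← dirDot_eq_dot3 ξ w, ← dirDot_eq_dot3 ξ (magB U)] at key
  rw [← sq3.eq_1 (magB U), hββ, h2] at key
  have key := key (dot3_dir3_self hξ) hc htr (by
    rw [← hchar, mul_pow, hinv, inv_mul_eq_div])
  calc coupling pfun ξ U w b
      = soundC pfun U * (√(dens U) * dirDot d2le3 ξ w) * √(2 * intE U)
        + √(dens U) * dirDot d2le3 ξ w * ((√(dens U))⁻¹ * dot3 (magB U) b)
        - (√(dens U))⁻¹ * dirDot d2le3 ξ (magB U) * (√(dens U) * dot3 w b) := by
        rw [coupling, ← soundC_mul (pfun := pfun) hU]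
        field_simp
    _ ≤ _ := key
    _ = _ := by
        rw [← mul_assoc √(dens U), ← sq, hss, sq3, sq3]
        ring

theorem abs_coupling_le {pfun : ℝ → ℝ → ℝ} (hEOS : IsEOS pfun) {ξ : Fin 2 → ℝ} (hξ : unitVec ξ)
    {U : MHDState} (hU : U ∈ Gset) (vs Bs : Fin 3 → ℝ) :
    |coupling pfun ξ U (vel U - vs) (magB U - Bs)|
      ≤ waveC pfun d2le3 ξ U * relE U vs Bs := by
  rw [relE_eq hU.1, abs_le']
  refine ⟨coupling_le hEOS hξ hU _ _, ?_⟩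
  rw [← coupling_neg]
  refine (coupling_le hEOS hξ hU _ _).trans_eq ?_
  have : sq3 (-(vel U - vs)) = sq3 (vel U - vs) := by
    simp only [sq3, dot3, Pi.neg_apply, neg_mul_neg]
  rw [this]

theorem jump_le {ξ : Fin 2 → ℝ} (hξ : unitVec ξ) {U Ut : MHDState} (hU : U ∈ Gset)
    (hUt : Ut ∈ Gset) (vs Bs : Fin 3 → ℝ) :
    (dirDot d2le3 ξ vs - dirDot d2le3 ξ (roeV U Ut))
        * ((sq3 (magB U - Bs) - sq3 (magB Ut - Bs)) / 2)
      ≤ norm3 (magB U - magB Ut) / (√(dens U) + √(dens Ut))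
        * (relE U vs Bs + relE Ut vs Bs) := by
  have hs : 0 < √(dens U) := Real.sqrt_pos.2 hU.1
  have hst : 0 < √(dens Ut) := Real.sqrt_pos.2 hUt.1
  have hss : √(dens U) ^ 2 = dens U := Real.sq_sqrt hU.1.le
  have hsst : √(dens Ut) ^ 2 = dens Ut := Real.sq_sqrt hUt.1.le
  have hn : 0 ≤ norm3 (magB U - magB Ut) := Real.sqrt_nonneg _
  have key := roe_jump_bound (e := (WithLp.toLp 2 (dir3 ξ) : EuclideanSpace ℝ (Fin 3)))
    (x₁ := √(dens U) • WithLp.toLp 2 (vel U - vs)) (x₂ := √(dens Ut) • WithLp.toLp 2 (vel Ut - vs))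
    (b₁ := WithLp.toLp 2 (magB U - Bs)) (b₂ := WithLp.toLp 2 (magB Ut - Bs))
  rw [← WithLp.toLp_sub, sub_sub_sub_cancel_right, norm_toLp_eq_norm3] at key
  simp only [real_inner_smul_left, real_inner_smul_right, inner_toLp_eq_dot3] at key
  have key := key (dot3_dir3_self hξ)
  simp only [← dirDot_eq_dot3] at key
  have hroe : dirDot d2le3 ξ vs - dirDot d2le3 ξ (roeV U Ut)
      = -(√(dens U) * dirDot d2le3 ξ (vel U - vs) + √(dens Ut) * dirDot d2le3 ξ (vel Ut - vs))
        / (√(dens U) + √(dens Ut)) := by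
    simp only [dirDot, roeV, Fin.sum_univ_two, Pi.sub_apply]
    field_simp
    ring
  rw [hroe, div_mul_eq_mul_div, div_mul_eq_mul_div]
  refine div_le_div_of_nonneg_right (key.trans ?_) (by positivity)
  refine mul_le_mul_of_nonneg_left ?_ hn
  simp only [← sq3.eq_1]
  rw [relE_eq hU.1, relE_eq hUt.1, ← mul_assoc, ← mul_assoc, ← sq, ← sq, hss, hsst]
  linarith [hU.2, hUt.2]

section HLL

variable {pfun : ℝ → ℝ → ℝ} {ξ : Fin 2 → ℝ} {Um Up : MHDState} {σm σp : ℝ}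

theorem speeds_lt (hEOS : IsEOS pfun) (hξ : unitVec ξ) (hUm : Um ∈ Gset) (hUp : Up ∈ Gset)
    (hr : alphaR pfun d2le3 ξ Up Um ≤ σp) (hl : σm ≤ alphaL pfun d2le3 ξ Um Up) :
    dirDot d2le3 ξ (vel Up) < σp ∧ σm < dirDot d2le3 ξ (vel Um) ∧ σm < σp := by
  have hcp := (waveC_spec hEOS hξ hUp).1
  have hcm := (waveC_spec hEOS hξ hUm).1
  have hdp : 0 ≤ norm3 (magB Up - magB Um) / (√(dens Up) + √(dens Um)) := by
    unfold norm3; positivity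
  have hdm : 0 ≤ norm3 (magB Um - magB Up) / (√(dens Um) + √(dens Up)) := by
    unfold norm3; positivity
  have hroe : roeV Up Um = roeV Um Up := by
    funext k; simp only [roeV, add_comm]
  unfold alphaR at hr
  unfold alphaL at hl
  rw [hroe] at hr
  have h1 := le_max_left (dirDot d2le3 ξ (vel Up)) (dirDot d2le3 ξ (roeV Um Up))
  have h2 := le_max_right (dirDot d2le3 ξ (vel Up)) (dirDot d2le3 ξ (roeV Um Up))
  have h3 := min_le_left (dirDot d2le3 ξ (vel Um)) (dirDot d2le3 ξ (roeV Um Up))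
  have h4 := min_le_right (dirDot d2le3 ξ (vel Um)) (dirDot d2le3 ξ (roeV Um Up))
  exact ⟨by linarith, by linarith, by linarith⟩

theorem dens_hllMid_pos (hEOS : IsEOS pfun) (hξ : unitVec ξ) (hUm : Um ∈ Gset)
    (hUp : Up ∈ Gset) (hr : alphaR pfun d2le3 ξ Up Um ≤ σp)
    (hl : σm ≤ alphaL pfun d2le3 ξ Um Up) :
    0 < dens (hllMid pfun d2le3 ξ Um Up σm σp) := by
  obtain ⟨h1, h2, h3⟩ := speeds_lt hEOS hξ hUm hUp hr hl
  have hp := dens_dirFlux pfun ξ Up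
  have hm := dens_dirFlux pfun ξ Um
  have e : dens (hllMid pfun d2le3 ξ Um Up σm σp)
      = (σp - σm)⁻¹ * (dens Up * (σp - dirDot d2le3 ξ (vel Up))
        + dens Um * (dirDot d2le3 ξ (vel Um) - σm)) := by
    have : dens (hllMid pfun d2le3 ξ Um Up σm σp) = (σp - σm)⁻¹ * (σp * dens Up
        - dens (dirFlux pfun d2le3 ξ Up) - σm * dens Um + dens (dirFlux pfun d2le3 ξ Um)) := by
      simp [hllMid, dens]
    rw [this, hp, hm]
    ring
  rw [e]
  have hUp1 := hUp.1
  have hUm1 := hUm.1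
  have h4 := mul_pos hUp1 (sub_pos.2 h1)
  have h5 := mul_pos hUm1 (sub_pos.2 h2)
  have h6 := inv_pos.2 (sub_pos.2 h3)
  positivity

/-- The relative energy of the HLL intermediate state is bounded below by a multiple of the jump
of the normal magnetic field. -/
theorem relE_hllMid_ge (hEOS : IsEOS pfun) (hξ : unitVec ξ) (hUm : Um ∈ Gset)
    (hUp : Up ∈ Gset) (hr : alphaR pfun d2le3 ξ Up Um ≤ σp)
    (hl : σm ≤ alphaL pfun d2le3 ξ Um Up) (vs Bs : Fin 3 → ℝ) :
    -((dirDot d2le3 ξ (magB Up) - dirDot d2le3 ξ (magB Um)) / (σp - σm) * dot3 vs Bs)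
      ≤ relE (hllMid pfun d2le3 ξ Um Up σm σp) vs Bs := by
  have hlt := sub_pos.2 (speeds_lt hEOS hξ hUm hUp hr hl).2.2
  have e : relE (hllMid pfun d2le3 ξ Um Up σm σp) vs Bs
      = (σp - σm)⁻¹ * (σp * relE Up vs Bs - dot8 (dirFlux pfun d2le3 ξ Up) (nstar vs Bs)
        - σm * relE Um vs Bs + dot8 (dirFlux pfun d2le3 ξ Um) (nstar vs Bs)) := by
    have : dot8 (hllMid pfun d2le3 ξ Um Up σm σp) (nstar vs Bs)
        = (σp - σm)⁻¹ * (σp * dot8 Up (nstar vs Bs)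
          - dot8 (dirFlux pfun d2le3 ξ Up) (nstar vs Bs)
          - σm * dot8 Um (nstar vs Bs) + dot8 (dirFlux pfun d2le3 ξ Um) (nstar vs Bs)) := by
      simp only [dot8, ← dotProduct.eq_1, hllMid, smul_dotProduct, add_dotProduct,
        sub_dotProduct, smul_eq_mul]
    rw [relE, this, relE, relE]
    field_simp
    ring
  rw [e, dot8_dirFlux_nstar pfun ξ hUp.1, dot8_dirFlux_nstar pfun ξ hUm.1]
  have hcp := (abs_le.1 (abs_coupling_le hEOS hξ hUp vs Bs)).2
  have hcm := (abs_le.1 (abs_coupling_le hEOS hξ hUm vs Bs)).1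
  have hj := jump_le hξ hUp hUm vs Bs
  have hnorm : norm3 (magB Um - magB Up) = norm3 (magB Up - magB Um) := by
    rw [← norm_toLp_eq_norm3, ← norm_toLp_eq_norm3, WithLp.toLp_sub, WithLp.toLp_sub,
      norm_sub_rev]
  have hroe : roeV Um Up = roeV Up Um := by
    funext k; simp only [roeV, add_comm]
  unfold alphaR at hr
  unfold alphaL at hl
  rw [hnorm, hroe, add_comm √(dens Um)] at hl
  have h1 := le_max_left (dirDot d2le3 ξ (vel Up)) (dirDot d2le3 ξ (roeV Up Um))
  have h2 := le_max_right (dirDot d2le3 ξ (vel Up)) (dirDot d2le3 ξ (roeV Up Um))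
  have h3 := min_le_left (dirDot d2le3 ξ (vel Um)) (dirDot d2le3 ξ (roeV Up Um))
  have h4 := min_le_right (dirDot d2le3 ξ (vel Um)) (dirDot d2le3 ξ (roeV Up Um))
  have hQp := (relE_pos hUp vs Bs).le
  have hQm := (relE_pos hUm vs Bs).le
  have hbp : 0 ≤ sq3 (magB Up - Bs) / 2 := by linarith [sq3_nonneg (magB Up - Bs)]
  have hbm : 0 ≤ sq3 (magB Um - Bs) / 2 := by linarith [sq3_nonneg (magB Um - Bs)]
  have hbQp : sq3 (magB Up - Bs) / 2 ≤ relE Up vs Bs := by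
    rw [relE_eq hUp.1]
    linarith [mul_nonneg hUp.1.le (sq3_nonneg (vel Up - vs)), hUp.2]
  have hbQm : sq3 (magB Um - Bs) / 2 ≤ relE Um vs Bs := by
    rw [relE_eq hUm.1]
    linarith [mul_nonneg hUm.1.le (sq3_nonneg (vel Um - vs)), hUm.2]
  have hsub : ∀ w, dirDot d2le3 ξ (w - vs) = dirDot d2le3 ξ w - dirDot d2le3 ξ vs := by
    intro w
    simp only [dirDot, Fin.sum_univ_two, Pi.sub_apply]
    ring
  rw [hsub, hsub]
  have hneg : ∀ x y : ℝ, -(x / (σp - σm) * y) = (σp - σm)⁻¹ * (-(x * y)) := by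
    intro x y
    rw [div_eq_inv_mul]
    ring
  rw [hneg]
  refine mul_le_mul_of_nonneg_left ?_ (inv_pos.2 hlt).le
  have h5 := mul_le_mul_of_nonneg_right hr hQp
  have h6 := mul_le_mul_of_nonneg_right hl hQm
  have h7 := mul_le_mul_of_nonneg_right h1 (sub_nonneg.2 hbQp)
  have h8 := mul_le_mul_of_nonneg_right h2 hbp
  have h9 := mul_le_mul_of_nonneg_right h3 (sub_nonneg.2 hbQm)
  have h10 := mul_le_mul_of_nonneg_right h4 hbm
  linarith

/-- The HLL flux expressed through the intermediate state. -/
theorem hllFlux_eq_hllMid (h : σm < σp) :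
    hllFlux pfun d2le3 ξ Um Up σm σp
      = σm • hllMid pfun d2le3 ξ Um Up σm σp + dirFlux pfun d2le3 ξ Um - σm • Um := by
  have h' : σp - σm ≠ 0 := (sub_pos.2 h).ne'
  funext i
  simp only [hllFlux, hllMid, Pi.smul_apply, Pi.add_apply, Pi.sub_apply, smul_eq_mul]
  field_simp
  ring

end HLL

/-- Green's identity: constant fluxes sum to zero over a closed polygon. -/
theorem sum_len_dirFlux (pfun : ℝ → ℝ → ℝ) {N : ℕ} {len : Fin N → ℝ} {ξ : Fin N → Fin 2 → ℝ}
    (hGreen : (∑ j, len j • ξ j) = 0) (U : MHDState) :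
    ∑ j, len j • dirFlux pfun d2le3 (ξ j) U = 0 := by
  have h : ∀ k, ∑ j, len j * ξ j k = 0 := fun k => by
    simpa [Finset.sum_apply] using congrFun hGreen k
  simp only [dirFlux, Finset.smul_sum, smul_smul]
  rw [Finset.sum_comm]
  refine Finset.sum_eq_zero fun k _ => ?_
  rw [← Finset.sum_smul, h, zero_smul]

theorem sum_len_dirDot {N : ℕ} {len : Fin N → ℝ} {ξ : Fin N → Fin 2 → ℝ}
    (hGreen : (∑ j, len j • ξ j) = 0) (w : Fin 3 → ℝ) :
    ∑ j, len j * dirDot d2le3 (ξ j) w = 0 := by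
  have h : ∀ k, ∑ j, len j * ξ j k = 0 := fun k => by
    simpa [Finset.sum_apply] using congrFun hGreen k
  simp only [dirDot, Finset.mul_sum, ← mul_assoc]
  rw [Finset.sum_comm]
  refine Finset.sum_eq_zero fun k _ => ?_
  rw [← Finset.sum_mul, h, zero_mul]

theorem abs_dot3_le_relE {U : MHDState} (hU : U ∈ Gset) (vs Bs : Fin 3 → ℝ) :
    |dot3 (vel U - vs) (magB U - Bs)| ≤ relE U vs Bs / √(dens U) := by
  have hs : 0 < √(dens U) := Real.sqrt_pos.2 hU.1
  have hss : √(dens U) ^ 2 = dens U := Real.sq_sqrt hU.1.le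
  have h1 := dot3_mul_self_le (vel U - vs) (magB U - Bs)
  rw [← sq3, ← sq3] at h1
  rw [le_div_iff₀ hs, show |dot3 (vel U - vs) (magB U - Bs)| * √(dens U)
    = |dot3 (vel U - vs) (magB U - Bs) * √(dens U)| by rw [abs_mul, abs_of_pos hs]]
  refine abs_le_of_sq_le_sq ?_ (relE_pos hU vs Bs).le
  have h2 := mul_le_mul_of_nonneg_right h1 (hU.1.le)
  have h3 : (dens U * sq3 (vel U - vs) + sq3 (magB U - Bs)) / 2 ≤ relE U vs Bs := by
    rw [relE_eq hU.1]
    linarith [hU.2]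
  have h4 := mul_nonneg hU.1.le (sq3_nonneg (vel U - vs))
  have h5 := sq3_nonneg (magB U - Bs)
  rw [mul_pow, hss]
  refine h2.trans (le_trans ?_ (pow_le_pow_left₀ (by positivity) h3 2))
  linarith [sq_nonneg (dens U * sq3 (vel U - vs) - sq3 (magB U - Bs))]

/-- Theorem 4.1: positivity preservation of the first-order 2D scheme with
the Godunov–Powell penalty source term (one cell, one step). -/
theorem twoD_first_order_scheme_PP (pfun : ℝ → ℝ → ℝ) (hEOS : IsEOS pfun)
    {N : ℕ} (hN : 1 ≤ N)
    (areaK : ℝ) (hK : 0 < areaK)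
    (len : Fin N → ℝ) (hlen : ∀ j, 0 < len j)
    (ξ : Fin N → Fin 2 → ℝ) (hξ : ∀ j, unitVec (ξ j))
    (hGreen : (∑ j, len j • ξ j) = 0)
    (UK : MHDState) (hUK : UK ∈ Gset)
    (Un : Fin N → MHDState) (hUn : ∀ j, Un j ∈ Gset)
    (σr σl : Fin N → ℝ)
    (hr : ∀ j, alphaR pfun d2le3 (ξ j) (Un j) UK ≤ σr j)
    (hl : ∀ j, σl j ≤ alphaL pfun d2le3 (ξ j) UK (Un j))
    (Δt : ℝ) (hΔt : 0 < Δt)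
    (div : ℝ)
    (hdiv : div = areaK⁻¹ *
      ∑ j, len j * dirDot d2le3 (ξ j)
        (fun k => (max (σr j) 0 * magB UK k - min (σl j) 0 * magB (Un j) k)
          / (max (σr j) 0 - min (σl j) 0)))
    (hCFL : Δt * (areaK⁻¹ * (∑ j, len j * (-min (σl j) 0))
        + |div| / Real.sqrt (dens UK)) < 1) :
    UK - (Δt / areaK) •
        (∑ j, len j • hllFlux pfun d2le3 (ξ j) UK (Un j) (min (σl j) 0) (max (σr j) 0))
      - (Δt * div) • source UK ∈ Gset := by
  set σp : Fin N → ℝ := fun j => max (σr j) 0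
  set σm : Fin N → ℝ := fun j => min (σl j) 0
  have hr' : ∀ j, alphaR pfun d2le3 (ξ j) (Un j) UK ≤ σp j :=
    fun j => (hr j).trans (le_max_left _ _)
  have hl' : ∀ j, σm j ≤ alphaL pfun d2le3 (ξ j) UK (Un j) :=
    fun j => (min_le_left _ _).trans (hl j)
  have hlt : ∀ j, σm j < σp j := fun j =>
    (speeds_lt hEOS (hξ j) hUK (hUn j) (hr' j) (hl' j)).2.2
  set H : Fin N → MHDState := fun j => hllMid pfun d2le3 (ξ j) UK (Un j) (σm j) (σp j)
  set c : Fin N → ℝ := fun j => Δt / areaK * (len j * -σm j) with hc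
  have hc0 : ∀ j, 0 ≤ c j := fun j =>
    mul_nonneg (div_pos hΔt hK).le (mul_nonneg (hlen j).le (neg_nonneg.2 (min_le_right _ _)))
  have hflux : ∑ j, len j • hllFlux pfun d2le3 (ξ j) UK (Un j) (σm j) (σp j)
      = ∑ j, ((len j * σm j) • H j - (len j * σm j) • UK) := by
    rw [← add_zero (∑ j, ((len j * σm j) • H j - (len j * σm j) • UK)),
      ← sum_len_dirFlux pfun hGreen UK, ← Finset.sum_add_distrib]
    refine Finset.sum_congr rfl fun j _ => ?_
    rw [hllFlux_eq_hllMid (hlt j)]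
    module
  have hupd : UK - (Δt / areaK) •
        (∑ j, len j • hllFlux pfun d2le3 (ξ j) UK (Un j) (σm j) (σp j))
      - (Δt * div) • source UK
      = (1 - ∑ j, c j) • UK + ∑ j, c j • H j - (Δt * div) • source UK := by
    rw [hflux, Finset.sum_sub_distrib, ← Finset.sum_smul, sub_smul, one_smul]
    have e1 : ∑ j, c j = -(Δt / areaK) * ∑ j, len j * σm j := by
      rw [Finset.mul_sum]
      exact Finset.sum_congr rfl fun j _ => by simp only [hc]; ring
    have e2 : ∑ j, c j • H j = -(Δt / areaK) • ∑ j, (len j * σm j) • H j := by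
      rw [Finset.smul_sum]
      refine Finset.sum_congr rfl fun j _ => ?_
      simp only [hc]
      module
    rw [e1, e2]
    module
  have hdiv' : Δt * div = ∑ j, c j *
      ((dirDot d2le3 (ξ j) (magB (Un j)) - dirDot d2le3 (ξ j) (magB UK)) / (σp j - σm j)) := by
    have e : ∀ j, len j * dirDot d2le3 (ξ j)
        (fun k => (σp j * magB UK k - σm j * magB (Un j) k) / (σp j - σm j))
        = len j * -σm j * ((dirDot d2le3 (ξ j) (magB (Un j)) - dirDot d2le3 (ξ j) (magB UK))
          / (σp j - σm j)) + len j * dirDot d2le3 (ξ j) (magB UK) := by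
      intro j
      have : σp j - σm j ≠ 0 := (sub_pos.2 (hlt j)).ne'
      simp only [dirDot, Fin.sum_univ_two]
      field_simp
      ring
    rw [hdiv, Finset.sum_congr rfl fun j _ => e j, Finset.sum_add_distrib,
      sum_len_dirDot hGreen, add_zero, ← mul_assoc, Finset.mul_sum]
    exact Finset.sum_congr rfl fun j _ => by simp only [hc]; ring
  have hsum : Δt * (areaK⁻¹ * ∑ j, len j * -σm j) = ∑ j, c j := by
    rw [← mul_assoc, Finset.mul_sum]
    exact Finset.sum_congr rfl fun j _ => by simp only [hc]; ring
  have hCFL' : Δt * |div| / √(dens UK) < 1 - ∑ j, c j := by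
    rw [← hsum, mul_div_assoc]
    linarith
  have hθ : 0 < 1 - ∑ j, c j := lt_of_le_of_lt (by positivity) hCFL'
  rw [hupd]
  set U' := (1 - ∑ j, c j) • UK + ∑ j, c j • H j - (Δt * div) • source UK with hU'
  have hdens : 0 < dens U' := by
    have e : dens U' = (1 - ∑ j, c j) * dens UK + ∑ j, c j * dens (H j) := by
      simp only [hU', dens, Pi.add_apply, Pi.sub_apply, Pi.smul_apply, Finset.sum_apply,
        smul_eq_mul]
      simp [source, mk]
    rw [e]
    refine add_pos_of_pos_of_nonneg (mul_pos hθ hUK.1) (Finset.sum_nonneg fun j _ => ?_)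
    exact mul_nonneg (hc0 j)
      (dens_hllMid_pos hEOS (hξ j) hUK (hUn j) (hr' j) (hl' j)).le
  refine ⟨hdens, ?_⟩
  rw [← relE_self hdens]
  generalize vel U' = vs
  generalize magB U' = Bs
  have e : relE U' vs Bs = (1 - ∑ j, c j) * relE UK vs Bs + ∑ j, c j * relE (H j) vs Bs
      - Δt * div * (dot3 (vel UK - vs) (magB UK - Bs) - dot3 vs Bs) := by
    have : dot8 U' (nstar vs Bs) = (1 - ∑ j, c j) * dot8 UK (nstar vs Bs)
        + ∑ j, c j * dot8 (H j) (nstar vs Bs) - Δt * div * dot8 (source UK) (nstar vs Bs) := by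
      simp only [dot8, ← dotProduct.eq_1, hU', smul_dotProduct, add_dotProduct,
        sub_dotProduct, sum_dotProduct, smul_eq_mul]
    rw [relE, this, dot8_source_nstar]
    simp only [relE, mul_add, Finset.sum_add_distrib, ← Finset.sum_mul]
    ring
  have hlow : -(Δt * div * dot3 vs Bs) ≤ ∑ j, c j * relE (H j) vs Bs := by
    rw [hdiv', Finset.sum_mul, ← Finset.sum_neg_distrib]
    refine Finset.sum_le_sum fun j _ => ?_
    have := mul_le_mul_of_nonneg_left
      (relE_hllMid_ge hEOS (hξ j) hUK (hUn j) (hr' j) (hl' j) vs Bs) (hc0 j)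
    linarith
  have hsrc : Δt * div * dot3 (vel UK - vs) (magB UK - Bs)
      ≤ Δt * |div| / √(dens UK) * relE UK vs Bs := by
    calc Δt * div * dot3 (vel UK - vs) (magB UK - Bs)
        ≤ Δt * |div| * |dot3 (vel UK - vs) (magB UK - Bs)| := by
          refine (le_abs_self _).trans_eq ?_
          rw [abs_mul, abs_mul, abs_of_pos hΔt]
      _ ≤ Δt * |div| * (relE UK vs Bs / √(dens UK)) := by
          gcongr
          exact abs_dot3_le_relE hUK vs Bs
      _ = _ := by ring
  have hfin := mul_lt_mul_of_pos_right hCFL' (relE_pos hUK vs Bs)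
  rw [e]
  linarith
end MHD
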